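/- arXiv:1805.01303 — 12 statements merged into one kernel-verified Lean document; each statement's English description precedes it below -/
import Mathlib

section
/- Let V be a 2-dimensional complex vector space equipped with a symplectic form ω (a nondegenerate alternating bilinear form), and let L : V → V be a linear operator. Then L is nilpotent if and only if there exists a vector u ∈ V such that L v = ω(u,v) • u for all v ∈ V. -/
/-!
If `L v = ω(u,v) u`, then `L² = 0` because `ω(u,u) = 0`. Conversely, a nilpotent `L` on a plane
satisfies `L² = 0` by Cayley–Hamilton. If `L ≠ 0`, pick `w` with `e := L w ≠ 0`; then `w, e` is a
basis, and `ω(e,w) ≠ 0` since otherwise `ω(e,·) = 0`. The maps `L` and `v ↦ ω(e,w)⁻¹ ω(e,v) e`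
agree on this basis, so `u := s e` works for any complex square root `s` of `ω(e,w)⁻¹`.
-/

/-- Let `V` be a 2-dimensional complex vector space equipped with a
symplectic form `ω` (a nondegenerate alternating bilinear form), and let `L : V → V`
be a linear operator. Then `L` is nilpotent if and only if there exists `u ∈ V` such
that `L v = ω(u,v) • u` for all `v ∈ V`. -/
theorem nilpotent_iff_exists_symplectic_square
    (V : Type*) [AddCommGroup V] [Module ℂ V]
    (hdim : Module.finrank ℂ V = 2)
    (ω : LinearMap.BilinForm ℂ V)
    (halt : ∀ v : V, ω v v = 0)
    (hnd : ω.Nondegenerate)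
    (L : V →ₗ[ℂ] V) :
    IsNilpotent L ↔ ∃ u : V, ∀ v : V, L v = ω u v • u := by
  have : FiniteDimensional ℂ V := Module.finite_of_finrank_pos (by omega)
  constructor
  · intro hL
    have hsq : L ^ 2 = 0 := by
      have h := L.aeval_self_charpoly
      rw [hL.charpoly_eq_X_pow_finrank, hdim] at h
      simpa using h
    have hLL (v : V) : L (L v) = 0 := by
      simpa [pow_two] using LinearMap.congr_fun hsq v
    by_cases h0 : L = 0
    · exact ⟨0, by simp [h0]⟩
    obtain ⟨w, hw⟩ : ∃ w, L w ≠ 0 := by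
      by_contra! h
      exact h0 (LinearMap.ext h)
    have hli : LinearIndependent ℂ ![w, L w] := by
      rw [LinearIndependent.pair_iff]
      intro a b hab
      have ha : a = 0 := by
        have := congrArg L hab
        simpa [hLL, hw] using this
      subst ha
      simpa [hw] using hab
    have hspan (v : V) : ∃ a b : ℂ, a • w + b • L w = v := by
      have htop := hli.span_eq_top_of_card_eq_finrank' (by simp [hdim])
      have hv : v ∈ Submodule.span ℂ (Set.range ![w, L w]) := htop ▸ Submodule.mem_top
      rwa [Matrix.range_cons_cons_empty, Submodule.mem_span_pair] at hv
    have hc : ω (L w) w ≠ 0 := by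
      intro hc
      refine hw (hnd.1 (L w) fun v => ?_)
      obtain ⟨a, b, rfl⟩ := hspan v
      simp [hc, halt]
    obtain ⟨s, hs⟩ := IsAlgClosed.exists_pow_nat_eq (ω (L w) w)⁻¹ (n := 2) (by norm_num)
    refine ⟨s • L w, fun v => ?_⟩
    obtain ⟨a, b, rfl⟩ := hspan v
    have key : a * (s * ω (L w) w) * s = a := by
      calc a * (s * ω (L w) w) * s = s ^ 2 * ω (L w) w * a := by ring
        _ = a := by rw [hs, inv_mul_cancel₀ hc, one_mul]
    simp only [map_add, map_smul, hLL, halt, LinearMap.smul_apply, smul_eq_mul, smul_zero,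
      mul_zero, add_zero, smul_smul]
    rw [key]
  · rintro ⟨u, hu⟩
    refine ⟨2, LinearMap.ext fun v => ?_⟩
    simp [pow_two, hu, halt]
end

section
/- Let p ∈ ℝ⁴ be a covector with η^{αβ} p_α p_β = 0 and p₄ > 0, and let u ∈ ℂ⁴ be a vector with u_α u^α = 0, u_α ū^α > 0, and p_α u^α = 0, where u_α = η_{αβ} u^β. For θ ∈ ℝ define the real 4×4 matrix D by D^α{}_β = δ^α{}_β + Re( i u^α p_β e^{iθ} ). Then det D = 1, and the strain matrix S defined by S^α{}_β = η^{αγ} (D^μ{}_γ η_{μν} D^ν{}_β) − δ^α{}_β satisfies S³ = 0; in particular all four elementary symmetric polynomials of the eigenvalues of S vanish. -/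
/-!
With `v = Re (i e^{iθ} u)`, the matrix is `D = 1 + v ⊗ p` and `p · v = 0`, so `det D = 1 + p · v = 1`.
Write `q = η p` and `w = η v`. Then `1 + S = (1 + q ⊗ w)(1 + v ⊗ p)`, that is
`S = q ⊗ w + (v + (w · v) q) ⊗ p`, where `w · q = p · v = 0` and `p · q = 0` because `p` is lightlike.
Hence `S` maps `v` to a multiple of `q` and kills `q`, which gives `S² = (w · v) q ⊗ p` and
`S³ = 0`. The traces of `S` and `S²` are read off these formulas, and the adjugate of `S` vanishes
because `S` is a sum of two rank-one matrices, so that all of its `3 × 3` minors are zero.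
-/

open Matrix Complex

/-- A `4 × 4` matrix of rank at most two has zero adjugate: its `3 × 3` minors vanish. -/
lemma adjugate_eq_zero_of_rank_two (a b c d : Fin 4 → ℝ) :
    (vecMulVec a c + vecMulVec b d).adjugate = 0 := by
  ext i j
  rw [adjugate_fin_succ_eq_det_submatrix, det_fin_three]
  simp only [submatrix_apply, Matrix.add_apply, vecMulVec_apply, Matrix.zero_apply]
  ring

/-- The square of the strain `S = q ⊗ w + (v + (w · v) q) ⊗ p`: the orthogonality relations kill
every cross term except the one contracting `w` with `v`. -/
lemma strain_sq (p v q w : Fin 4 → ℝ) (hpv : p ⬝ᵥ v = 0) (hpq : p ⬝ᵥ q = 0)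
    (hwq : w ⬝ᵥ q = 0) :
    (vecMulVec q w + vecMulVec (v + (w ⬝ᵥ v) • q) p) *
      (vecMulVec q w + vecMulVec (v + (w ⬝ᵥ v) • q) p) = (w ⬝ᵥ v) • vecMulVec q p := by
  simp [mul_add, add_mul, vecMulVec_mul_vecMulVec, dotProduct_add, hpv, hpq, hwq,
    vecMulVec_smul]

/-- Let `p ∈ ℝ⁴` be a lightlike covector (`η^{αβ} p_α p_β = 0`, `p₄ > 0`)
and let `u ∈ ℂ⁴` be isotropic (`u_α u^α = 0`, `u_α ū^α > 0`) and orthogonal to `p`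
(`p_α u^α = 0`).  For `θ ∈ ℝ` define `D^α{}_β = δ^α{}_β + Re(i u^α p_β e^{iθ})`.
Then `det D = 1` and the strain matrix `S^α{}_β = η^{αγ}(D^μ{}_γ η_{μν} D^ν{}_β) − δ^α{}_β`
satisfies `S³ = 0`; in particular all four elementary symmetric polynomials of the
eigenvalues of `S` vanish. -/
theorem massless_solution_volume_preserving_and_strain_nilpotent
    (p : Fin 4 → ℝ)
    (hp_null : p 0 ^ 2 + p 1 ^ 2 + p 2 ^ 2 - p 3 ^ 2 = 0)
    (hp_fwd : 0 < p 3)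
    (u : Fin 4 → ℂ)
    (hu_null : u 0 ^ 2 + u 1 ^ 2 + u 2 ^ 2 - u 3 ^ 2 = 0)
    (hu_pos : 0 < normSq (u 0) + normSq (u 1) + normSq (u 2) - normSq (u 3))
    (hpu : (p 0 : ℂ) * u 0 + (p 1 : ℂ) * u 1 + (p 2 : ℂ) * u 2 + (p 3 : ℂ) * u 3 = 0)
    (θ : ℝ)
    (η : Matrix (Fin 4) (Fin 4) ℝ)
    (hη : η = Matrix.diagonal ![1, 1, 1, -1])
    (D : Matrix (Fin 4) (Fin 4) ℝ)
    (hD : ∀ α β : Fin 4, D α β =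
      (if α = β then 1 else 0) + (Complex.I * u α * (p β : ℂ) * Complex.exp (θ * Complex.I)).re)
    (S : Matrix (Fin 4) (Fin 4) ℝ)
    (hS : S = η * Dᵀ * η * D - 1) :
    D.det = 1 ∧ S ^ 3 = 0 ∧
      S.trace = 0 ∧ (1 / 2 : ℝ) * (S.trace ^ 2 - (S * S).trace) = 0 ∧
      S.adjugate.trace = 0 ∧ S.det = 0 := by
  set v : Fin 4 → ℝ := fun α => (I * u α * exp (θ * I)).re with hv
  set q : Fin 4 → ℝ := ![p 0, p 1, p 2, -p 3] with hq
  set w : Fin 4 → ℝ := ![v 0, v 1, v 2, -v 3] with hw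
  have hDv : D = 1 + vecMulVec v p := by
    ext α β
    rw [hD, Matrix.add_apply, Matrix.one_apply, vecMulVec_apply, hv,
      show I * u α * (p β : ℂ) * exp (θ * I) = I * u α * exp (θ * I) * (p β : ℂ) by ring,
      re_mul_ofReal]
  have hpv : p ⬝ᵥ v = 0 := by
    have h := congrArg (fun z : ℂ => (z * (I * exp (θ * I))).re) hpu
    simp only [zero_mul, zero_re] at h
    rw [← h]
    simp only [dotProduct, Fin.sum_univ_four, hv, ← re_ofReal_mul, ← add_re]
    congr 1
    ring
  have hpq : p ⬝ᵥ q = 0 := by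
    simp only [dotProduct, Fin.sum_univ_four, hq]
    simp
    linarith
  have hwq : w ⬝ᵥ q = 0 := by
    rw [← hpv]
    simp only [dotProduct, Fin.sum_univ_four, hq, hw]
    simp
    ring
  have hηD : η * Dᵀ * η = 1 + vecMulVec q w := by
    rw [hη, hDv]
    ext i j
    rw [mul_diagonal, diagonal_mul]
    fin_cases i <;> fin_cases j <;> simp [vecMulVec_apply, hq, hw, mul_comm] <;> ring
  have hS' : S = vecMulVec q w + vecMulVec (v + (w ⬝ᵥ v) • q) p := by
    rw [hS, hηD, hDv]
    simp only [add_mul, mul_add, one_mul, mul_one, vecMulVec_mul_vecMulVec, add_vecMulVec,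
      smul_vecMulVec, vecMulVec_smul]
    abel
  have hS2 : S * S = (w ⬝ᵥ v) • vecMulVec q p := by
    rw [hS']
    exact strain_sq p v q w hpv hpq hwq
  have hS3 : S ^ 3 = 0 := by
    rw [pow_succ, pow_two, hS2, hS']
    simp [mul_add, vecMulVec_mul_vecMulVec, dotProduct_add, hpv, hpq]
  have htr : S.trace = 0 := by
    rw [hS']
    simp [trace_vecMulVec, add_vecMulVec, dotProduct_comm q w, dotProduct_comm v p,
      dotProduct_comm q p, hpv, hpq, hwq]
  refine ⟨?_, hS3, htr, ?_, ?_, ?_⟩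
  · rw [hDv, vecMulVec_eq Unit, det_one_add_replicateCol_mul_replicateRow, hpv, add_zero]
  · rw [htr, hS2, trace_smul, trace_vecMulVec, dotProduct_comm q p, hpq]
    simp
  · rw [hS', adjugate_eq_zero_of_rank_two, trace_zero]
  · have h := congrArg det hS3
    rw [det_pow, det_zero] at h
    exact pow_eq_zero_iff (by norm_num) |>.mp h
end

section
/- Let a ∈ ℝ with a ≠ 0, let θ ∈ ℝ, and let ε = ±1. Define the real 4×4 matrix S = [[0, 0, −a sin θ, −a sin θ], [0, 0, ε a cos θ, ε a cos θ], [−a sin θ, ε a cos θ, a², a²], [a sin θ, −ε a cos θ, −a², −a²]]. Then S³ = 0 and S² ≠ 0, i.e. S is nilpotent with nilpotency index exactly three. -/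
/-- Let `a ∈ ℝ`, `a ≠ 0`, `θ ∈ ℝ` and `ε = ±1`.  The strain matrix
`S = [[0, 0, −a sin θ, −a sin θ], [0, 0, εa cos θ, εa cos θ],
[−a sin θ, εa cos θ, a², a²], [a sin θ, −εa cos θ, −a², −a²]]` of the massless solution
satisfies `S³ = 0` and `S² ≠ 0`: it is nilpotent with nilpotency index exactly three. -/
theorem massless_strain_nilpotent_of_index_three
    (a : ℝ) (ha : a ≠ 0) (θ : ℝ) (ε : ℝ) (hε : ε = 1 ∨ ε = -1)
    (S : Matrix (Fin 4) (Fin 4) ℝ)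
    (hS : S = !![0, 0, -a * Real.sin θ, -a * Real.sin θ;
                 0, 0, ε * a * Real.cos θ, ε * a * Real.cos θ;
                 -a * Real.sin θ, ε * a * Real.cos θ, a ^ 2, a ^ 2;
                 a * Real.sin θ, -(ε * a * Real.cos θ), -a ^ 2, -a ^ 2]) :
    S ^ 3 = 0 ∧ S ^ 2 ≠ 0 := by
  have hε2 : ε ^ 2 = 1 := by rcases hε with rfl | rfl <;> norm_num
  have hcs := Real.sin_sq_add_cos_sq θ
  -- The last two rows of `S` are opposite, so only the last two rows of `S ^ 2` survive; their
  -- entries reduce to `± a ^ 2` by `ε ^ 2 = 1` and the Pythagorean identity.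
  have hsq : S ^ 2 = !![0, 0, 0, 0; 0, 0, 0, 0;
      0, 0, a ^ 2, a ^ 2; 0, 0, -a ^ 2, -a ^ 2] := by
    have key : a ^ 2 * Real.sin θ ^ 2 + ε ^ 2 * a ^ 2 * Real.cos θ ^ 2 = a ^ 2 := by
      rw [hε2]; linear_combination a ^ 2 * hcs
    rw [pow_two, hS]
    ext i j
    fin_cases i <;> fin_cases j <;> simp [Matrix.mul_apply, Fin.sum_univ_four] <;>
      first | ring1 | linear_combination key | linear_combination -key
  constructor
  · rw [pow_succ, hsq, hS]
    ext i j
    fin_cases i <;> fin_cases j <;> simp [Matrix.mul_apply, Fin.sum_univ_four]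
  · intro h
    have h22 := congrFun (congrFun (hsq.symm.trans h) 2) 2
    simp [ha] at h22
end

section
/- Let p ∈ ℝ⁴ be a covector with η^{αβ} p_α p_β = 0 and p₄ > 0, and let u ∈ ℂ⁴ be a vector with u_α u^α = 0, u_α ū^α > 0, and p_α u^α = 0. For θ ∈ ℝ define the real 4×4 matrices D^α{}_β = δ^α{}_β + Re( i u^α p_β e^{iθ} ), U^α{}_β = δ^α{}_β − ½ Re[ i ( p^α u_β − u^α p_β ) e^{iθ} ] − (u_γ ū^γ / 16) p^α p_β, and V^α{}_β = δ^α{}_β + ½ Re[ i ( p^α u_β + u^α p_β ) e^{iθ} ] + (3 u_γ ū^γ / 16) p^α p_β. Then: (i) D^α{}_β = U^α{}_γ V^γ{}_β (matrix product); (ii) U is Lorentz-orthogonal, i.e. U^μ{}_α η_{μν} U^ν{}_β = η_{αβ}; (iii) V is Lorentz-symmetric, i.e. η_{αγ} V^γ{}_β = η_{βγ} V^γ{}_α. -/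
open Matrix Complex

/-!
Put `a^α = Re(i u^α e^{iθ})`, a real vector. The scalar `e^{iθ}` has modulus one and `u` is null,
so `a_α a^α = w / 2`, while `p_α a^α = 0` and `p_α p^α = 0`. In terms of `a` one has
`D = 1 + a ⊗ p_♭`, `U = 1 - ½ (p^♯ ⊗ a_♭ - a ⊗ p_♭) - (w/16) p^♯ ⊗ p_♭` and
`V = 1 + ½ (p^♯ ⊗ a_♭ + a ⊗ p_♭) + (3w/16) p^♯ ⊗ p_♭`. In the products `U V` and `Uᵀ η U` these
contractions kill every quadratic term except a multiple of `p ⊗ p` proportional to `a_α a^α`,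
which cancels the contribution of the explicit `p ⊗ p` terms (`polar_product`, `polar_orthogonal`).
-/

/-- The identity `U V = D`, with `P = p^♯`, `b = a_♭` and the four contractions as hypotheses. -/
lemma polar_product {n : Type*} [Fintype n] [DecidableEq n] (p P a b : n → ℝ) (w : ℝ)
    (hpP : p ⬝ᵥ P = 0) (hpa : p ⬝ᵥ a = 0) (hbP : b ⬝ᵥ P = 0) (hba : b ⬝ᵥ a = w / 2) :
    (1 - (1 / 2 : ℝ) • (vecMulVec P b - vecMulVec a p) - (w / 16) • vecMulVec P p) *
      (1 + (1 / 2 : ℝ) • (vecMulVec P b + vecMulVec a p) + (3 * w / 16) • vecMulVec P p) =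
      1 + vecMulVec a p := by
  simp only [mul_add, sub_mul, mul_one, one_mul, smul_mul_assoc, mul_smul_comm,
    vecMulVec_mul_vecMulVec, hpP, hpa, hbP, hba]
  ext i j
  simp [vecMulVec_apply]
  ring

/-- The identity `Uᵀ η U = η`, with `P = p^♯` and `b = a_♭`. -/
lemma polar_orthogonal {n : Type*} [Fintype n] [DecidableEq n] (η : Matrix n n ℝ)
    (hη : ηᵀ = η) (p P a b : n → ℝ) (w : ℝ) (hP : η *ᵥ P = p) (ha : η *ᵥ a = b)
    (hpP : p ⬝ᵥ P = 0) (hpa : p ⬝ᵥ a = 0) (hbP : b ⬝ᵥ P = 0) (hba : b ⬝ᵥ a = w / 2) :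
    (1 - (1 / 2 : ℝ) • (vecMulVec P b - vecMulVec a p) - (w / 16) • vecMulVec P p)ᵀ * η *
      (1 - (1 / 2 : ℝ) • (vecMulVec P b - vecMulVec a p) - (w / 16) • vecMulVec P p) = η := by
  have hP' : P ᵥ* η = p := by rw [← hη, vecMul_transpose, hP]
  have ha' : a ᵥ* η = b := by rw [← hη, vecMul_transpose, ha]
  simp only [transpose_sub, transpose_smul, transpose_one, transpose_vecMulVec,
    mul_sub, sub_mul, mul_one, one_mul, smul_mul_assoc, mul_smul_comm, smul_sub,
    vecMulVec_mul, mul_vecMulVec, hP, ha, hP', ha',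
    vecMulVec_mulVec, hpP, hpa, hbP, hba]
  ext i j
  simp [vecMulVec_apply]
  ring

/-- A null complex vector `z` of Hermitian square `w` has a real part of square `w / 2`. -/
lemma re_sq_of_null (z : Fin 4 → ℂ) (w : ℝ)
    (hz : z 0 ^ 2 + z 1 ^ 2 + z 2 ^ 2 - z 3 ^ 2 = 0)
    (hw : w = normSq (z 0) + normSq (z 1) + normSq (z 2) - normSq (z 3)) :
    (z 0).re ^ 2 + (z 1).re ^ 2 + (z 2).re ^ 2 - (z 3).re ^ 2 = w / 2 := by
  have h := congrArg Complex.re hz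
  simp only [pow_two, add_re, sub_re, mul_re, zero_re] at h
  simp only [normSq_apply] at hw
  linarith

/-- Lorentzian polar decomposition of the deformation gradient of the
massless solution: with `D^α{}_β = δ^α{}_β + Re(i u^α p_β e^{iθ})`,
`U^α{}_β = δ^α{}_β − ½ Re[i(p^α u_β − u^α p_β)e^{iθ}] − (u_γ ū^γ/16) p^α p_β` and
`V^α{}_β = δ^α{}_β + ½ Re[i(p^α u_β + u^α p_β)e^{iθ}] + (3 u_γ ū^γ/16) p^α p_β`, one has
(i) `D = U V`; (ii) `U` is Lorentz-orthogonal, `U^μ{}_α η_{μν} U^ν{}_β = η_{αβ}`;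
(iii) `V` is Lorentz-symmetric, `η_{αγ} V^γ{}_β = η_{βγ} V^γ{}_α`. -/
theorem massless_deformation_gradient_polar_decomposition
    (p : Fin 4 → ℝ)
    (hp_null : p 0 ^ 2 + p 1 ^ 2 + p 2 ^ 2 - p 3 ^ 2 = 0)
    (hp_fwd : 0 < p 3)
    (u : Fin 4 → ℂ)
    (hu_null : u 0 ^ 2 + u 1 ^ 2 + u 2 ^ 2 - u 3 ^ 2 = 0)
    (hu_pos : 0 < normSq (u 0) + normSq (u 1) + normSq (u 2) - normSq (u 3))
    (hpu : (p 0 : ℂ) * u 0 + (p 1 : ℂ) * u 1 + (p 2 : ℂ) * u 2 + (p 3 : ℂ) * u 3 = 0)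
    (θ : ℝ)
    (η : Matrix (Fin 4) (Fin 4) ℝ)
    (hη : η = Matrix.diagonal ![1, 1, 1, -1])
    -- `pr` is the raised covector `p^α = η^{αβ} p_β`
    (pr : Fin 4 → ℝ) (hpr : pr = ![p 0, p 1, p 2, -p 3])
    -- `ul` is the lowered vector `u_β = η_{βγ} u^γ`
    (ul : Fin 4 → ℂ) (hul : ul = ![u 0, u 1, u 2, -u 3])
    -- `w` is the real scalar `u_γ ū^γ`
    (w : ℝ) (hw : w = normSq (u 0) + normSq (u 1) + normSq (u 2) - normSq (u 3))
    (D : Matrix (Fin 4) (Fin 4) ℝ)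
    (hD : ∀ α β : Fin 4, D α β =
      (if α = β then 1 else 0) + (Complex.I * u α * (p β : ℂ) * Complex.exp (θ * Complex.I)).re)
    (U : Matrix (Fin 4) (Fin 4) ℝ)
    (hU : ∀ α β : Fin 4, U α β =
      (if α = β then 1 else 0)
        - (1 / 2 : ℝ) * (Complex.I * ((pr α : ℂ) * ul β - u α * (p β : ℂ))
            * Complex.exp (θ * Complex.I)).re
        - w / 16 * pr α * p β)
    (V : Matrix (Fin 4) (Fin 4) ℝ)
    (hV : ∀ α β : Fin 4, V α β =
      (if α = β then 1 else 0)
        + (1 / 2 : ℝ) * (Complex.I * ((pr α : ℂ) * ul β + u α * (p β : ℂ))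
            * Complex.exp (θ * Complex.I)).re
        + 3 * w / 16 * pr α * p β) :
    D = U * V ∧ Uᵀ * η * U = η ∧ (η * V)ᵀ = η * V := by
  set e : ℂ := Complex.I * Complex.exp (θ * Complex.I) with he
  have hen : normSq e = 1 := by
    rw [he, map_mul, normSq_I, normSq_eq_norm_sq, norm_exp_ofReal_mul_I]
    norm_num
  set a : Fin 4 → ℝ := fun α => (e * u α).re with ha
  set b : Fin 4 → ℝ := ![a 0, a 1, a 2, -a 3] with hb
  have hbul : ∀ β, (e * ul β).re = b β := by
    intro β
    fin_cases β <;> simp [hul, hb, ha]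
  have haa : a 0 ^ 2 + a 1 ^ 2 + a 2 ^ 2 - a 3 ^ 2 = w / 2 := by
    refine re_sq_of_null (fun α => e * u α) w ?_ ?_
    · linear_combination e ^ 2 * hu_null
    · simp only [map_mul, hen, hw, one_mul]
  have hpa : p 0 * a 0 + p 1 * a 1 + p 2 * a 2 + p 3 * a 3 = 0 := by
    have h : (p 0 : ℂ) * (e * u 0) + p 1 * (e * u 1) + p 2 * (e * u 2) + p 3 * (e * u 3) = 0 := by
      linear_combination e * hpu
    simpa only [add_re, re_ofReal_mul, zero_re] using congrArg Complex.re h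
  have hpP' : p ⬝ᵥ pr = 0 := by
    simp [dotProduct, Fin.sum_univ_four, hpr]
    linarith
  have hpa' : p ⬝ᵥ a = 0 := by
    simp only [dotProduct, Fin.sum_univ_four]
    exact hpa
  have hbP' : b ⬝ᵥ pr = 0 := by
    simp [dotProduct, Fin.sum_univ_four, hpr, hb]
    linarith
  have hba' : b ⬝ᵥ a = w / 2 := by
    simp [dotProduct, Fin.sum_univ_four, hb]
    linarith
  have hηP : η *ᵥ pr = p := by
    ext i
    fin_cases i <;> simp [hη, hpr, mulVec_diagonal]
  have hηa : η *ᵥ a = b := by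
    ext i
    fin_cases i <;> simp [hη, hb, mulVec_diagonal]
  have hηt : ηᵀ = η := by rw [hη, diagonal_transpose]
  have hD' : D = 1 + vecMulVec a p := by
    ext α β
    have h : Complex.I * u α * (p β : ℂ) * Complex.exp (θ * Complex.I) = p β * (e * u α) := by
      rw [he]; ring
    rw [hD, h, re_ofReal_mul, Matrix.add_apply, one_apply, vecMulVec_apply, mul_comm (p β)]
  have hU' : U = 1 - (1 / 2 : ℝ) • (vecMulVec pr b - vecMulVec a p)
      - (w / 16) • vecMulVec pr p := by
    ext α β
    have h : Complex.I * ((pr α : ℂ) * ul β - u α * (p β : ℂ)) * Complex.exp (θ * Complex.I)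
        = pr α * (e * ul β) - p β * (e * u α) := by
      rw [he]; ring
    rw [hU, h, sub_re, re_ofReal_mul, re_ofReal_mul, hbul]
    simp only [Matrix.sub_apply, Matrix.smul_apply, one_apply, vecMulVec_apply, smul_eq_mul, ha]
    ring
  have hV' : V = 1 + (1 / 2 : ℝ) • (vecMulVec pr b + vecMulVec a p)
      + (3 * w / 16) • vecMulVec pr p := by
    ext α β
    have h : Complex.I * ((pr α : ℂ) * ul β + u α * (p β : ℂ)) * Complex.exp (θ * Complex.I)
        = pr α * (e * ul β) + p β * (e * u α) := by
      rw [he]; ring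
    rw [hV, h, add_re, re_ofReal_mul, re_ofReal_mul, hbul]
    simp only [Matrix.add_apply, Matrix.smul_apply, one_apply, vecMulVec_apply, smul_eq_mul, ha]
    ring
  refine ⟨?_, ?_, ?_⟩
  · rw [hD', hU', hV', polar_product p pr a b w hpP' hpa' hbP' hba']
  · rw [hU']
    exact polar_orthogonal η hηt p pr a b w hηP hηa hpP' hpa' hbP' hba'
  · rw [hV']
    simp only [mul_add, mul_one, mul_smul_comm, mul_vecMulVec, hηP, hηa, transpose_add,
      transpose_smul, transpose_vecMulVec, hηt]
    -- Now `η V = η + ½ (p ⊗ b + b ⊗ p) + (3w/16) p ⊗ p`, visibly symmetric.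
    rw [add_comm (vecMulVec b p)]
end

section
/- Let m > 0 and let p ∈ ℝ⁴ be a covector with p_α p^α = −4m² and p₄ > 0. Let u ∈ ℂ⁴ satisfy u_α u^α = 0, u_α ū^α > 0 and p_α u^α = 0, and let v ∈ ℝ⁴ satisfy p_α v^α = 0 and u_α v^α = 0. Set c = 4m² ( ½ u_α ū^α + v_β v^β ). For θ ∈ ℝ define the real 4×4 matrix D by D^α{}_β = δ^α{}_β + Re( i u^α p_β e^{iθ} ) + v^α p_β. Then det D = 1, and the strain matrix S^α{}_β = η^{αγ}(D^μ{}_γ η_{μν} D^ν{}_β) − δ^α{}_β has characteristic polynomial X²(X² + cX + c) = X⁴ + cX³ + cX²; equivalently tr S = −c, ½((tr S)² − tr(S²)) = c, tr(adj S) = 0 and det S = 0. -/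
/-!
Write `w = Re(i e^{iθ} u) + v`. Then `D = 1 + w pᵀ` is a rank-one perturbation of the identity with
`p · w = 0`, so `det D = 1 + p · w = 1`. Since `u` is null and orthogonal to `v`, the number
`q = w_α w^α` equals `½ u_α ū^α + v_α v^α`, independently of `θ`, so that `c = 4m² q`.

Expanding, `S = p♯ w♭ + w p + q p♯ p`, which factors as `S = A B` with `A` the `4 × 2` matrix with
columns `p♯, w` and `B` the `2 × 4` matrix with rows `w♭ + q p, p`. The small product is
`B A = !![-c, q; -4m², 0]`, with characteristic polynomial `X² + c X + c`, and the identity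
`X² χ_{AB} = X⁴ χ_{BA}` gives `χ_S`. The traces of `S` and `S²` are those of `B A` and `(B A)²`, and
`adj S = 0` because `S` has rank at most two.
-/

open Matrix Complex Polynomial

/-- The number `w_α w^α` for `w = Re(i e^{iθ} u) + v`, in terms of the real and imaginary parts
`a, b` of `u`; here `s, t` stand for `sin θ, cos θ`, so that `w = -(s a + t b) + v`. The hypotheses
are the real and imaginary parts of `u_α u^α = 0` and `u_α v^α = 0`. -/
lemma minkowski_sq_wave (a b v : Fin 4 → ℝ) (s t : ℝ) (hst : s ^ 2 + t ^ 2 = 1)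
    (hab : a 0 ^ 2 + a 1 ^ 2 + a 2 ^ 2 - a 3 ^ 2 = b 0 ^ 2 + b 1 ^ 2 + b 2 ^ 2 - b 3 ^ 2)
    (hab' : a 0 * b 0 + a 1 * b 1 + a 2 * b 2 - a 3 * b 3 = 0)
    (hav : a 0 * v 0 + a 1 * v 1 + a 2 * v 2 - a 3 * v 3 = 0)
    (hbv : b 0 * v 0 + b 1 * v 1 + b 2 * v 2 - b 3 * v 3 = 0) :
    (-(s * a 0 + t * b 0) + v 0) ^ 2 + (-(s * a 1 + t * b 1) + v 1) ^ 2
      + (-(s * a 2 + t * b 2) + v 2) ^ 2 - (-(s * a 3 + t * b 3) + v 3) ^ 2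
    = (1 / 2 : ℝ) * ((a 0 ^ 2 + b 0 ^ 2) + (a 1 ^ 2 + b 1 ^ 2) + (a 2 ^ 2 + b 2 ^ 2)
        - (a 3 ^ 2 + b 3 ^ 2)) + (v 0 ^ 2 + v 1 ^ 2 + v 2 ^ 2 - v 3 ^ 2) := by
  linear_combination (s ^ 2 - t ^ 2) / 2 * hab + 2 * s * t * hab' - 2 * s * hav - 2 * t * hbv
    + (1 / 2) * ((a 0 ^ 2 + b 0 ^ 2) + (a 1 ^ 2 + b 1 ^ 2) + (a 2 ^ 2 + b 2 ^ 2)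
        - (a 3 ^ 2 + b 3 ^ 2)) * hst

lemma adjugate_mul_eq_zero_of_inner_two (A : Matrix (Fin 4) (Fin 2) ℝ)
    (B : Matrix (Fin 2) (Fin 4) ℝ) : (A * B).adjugate = 0 := by
  ext i j
  rw [Matrix.adjugate_fin_succ_eq_det_submatrix, Matrix.det_fin_three]
  simp only [Matrix.submatrix_apply, Matrix.mul_apply, Fin.sum_univ_two, Matrix.zero_apply]
  ring

/-- The characteristic polynomial of a product through dimension two, in terms of the trace and
determinant of the product taken in the opposite order. -/
lemma charpoly_mul_of_inner_two (A : Matrix (Fin 4) (Fin 2) ℝ) (B : Matrix (Fin 2) (Fin 4) ℝ) :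
    (A * B).charpoly
      = X ^ 4 - C (B * A).trace * X ^ 3 + C (B * A).det * X ^ 2 := by
  have h := Matrix.charpoly_mul_comm' A B
  rw [Matrix.charpoly_fin_two] at h
  simp only [Fintype.card_fin] at h
  have hX : (X ^ 2 : ℝ[X]) ≠ 0 := pow_ne_zero _ X_ne_zero
  apply mul_left_cancel₀ hX
  rw [h]
  ring

/-- Let `m > 0` and let `p` be a timelike covector with `p_α p^α = −4m²`,
`p₄ > 0`.  Let `u ∈ ℂ⁴` be isotropic orthogonal to `p`, and `v ∈ ℝ⁴` orthogonal to `p`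
and `u`.  Set `c = 4m²(½ u_α ū^α + v_β v^β)`.  The deformation gradient
`D^α{}_β = δ^α{}_β + Re(i u^α p_β e^{iθ}) + v^α p_β` of the massive solution satisfies
`det D = 1`, and the strain matrix `S = η⁻¹ Dᵀ η D − 1` has characteristic polynomial
`X⁴ + cX³ + cX²`; equivalently `tr S = −c`, `½((tr S)² − tr(S²)) = c`, `tr(adj S) = 0`
and `det S = 0`. -/
theorem massive_solution_volume_preserving_and_strain_charpoly
    (m : ℝ) (hm : 0 < m)
    (p : Fin 4 → ℝ)
    (hp_time : p 0 ^ 2 + p 1 ^ 2 + p 2 ^ 2 - p 3 ^ 2 = -(4 * m ^ 2))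
    (hp_fwd : 0 < p 3)
    (u : Fin 4 → ℂ)
    (hu_null : u 0 ^ 2 + u 1 ^ 2 + u 2 ^ 2 - u 3 ^ 2 = 0)
    (hu_pos : 0 < normSq (u 0) + normSq (u 1) + normSq (u 2) - normSq (u 3))
    (hpu : (p 0 : ℂ) * u 0 + (p 1 : ℂ) * u 1 + (p 2 : ℂ) * u 2 + (p 3 : ℂ) * u 3 = 0)
    (v : Fin 4 → ℝ)
    (hpv : p 0 * v 0 + p 1 * v 1 + p 2 * v 2 + p 3 * v 3 = 0)
    (huv : u 0 * (v 0 : ℂ) + u 1 * (v 1 : ℂ) + u 2 * (v 2 : ℂ) - u 3 * (v 3 : ℂ) = 0)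
    (c : ℝ)
    (hc : c = 4 * m ^ 2 *
      ((1 / 2 : ℝ) * (normSq (u 0) + normSq (u 1) + normSq (u 2) - normSq (u 3))
        + (v 0 ^ 2 + v 1 ^ 2 + v 2 ^ 2 - v 3 ^ 2)))
    (θ : ℝ)
    (η : Matrix (Fin 4) (Fin 4) ℝ)
    (hη : η = Matrix.diagonal ![1, 1, 1, -1])
    (D : Matrix (Fin 4) (Fin 4) ℝ)
    (hD : ∀ α β : Fin 4, D α β =
      (if α = β then 1 else 0)
        + (Complex.I * u α * (p β : ℂ) * Complex.exp (θ * Complex.I)).re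
        + v α * p β)
    (S : Matrix (Fin 4) (Fin 4) ℝ)
    (hS : S = η * Dᵀ * η * D - 1) :
    D.det = 1 ∧
    S.charpoly = X ^ 4 + C c * X ^ 3 + C c * X ^ 2 ∧
    S.trace = -c ∧
    (1 / 2 : ℝ) * (S.trace ^ 2 - (S * S).trace) = c ∧
    S.adjugate.trace = 0 ∧
    S.det = 0 := by
  obtain ⟨w, hw⟩ : ∃ w : Fin 4 → ℝ, ∀ α, w α =
      -(Real.sin θ * (u α).re + Real.cos θ * (u α).im) + v α := ⟨_, fun _ => rfl⟩
  have hDw : ∀ α β, D α β = (if α = β then 1 else 0) + w α * p β := by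
    intro α β
    rw [hD, hw, Complex.exp_mul_I, ← Complex.ofReal_cos, ← Complex.ofReal_sin]
    simp [-Complex.ofReal_cos, -Complex.ofReal_sin]
    ring
  have hpu_re := congrArg Complex.re hpu
  have hpu_im := congrArg Complex.im hpu
  have huv_re := congrArg Complex.re huv
  have huv_im := congrArg Complex.im huv
  have hnull_re := congrArg Complex.re hu_null
  have hnull_im := congrArg Complex.im hu_null
  simp [pow_two] at hpu_re hpu_im huv_re huv_im hnull_re hnull_im
  have hpw : p 0 * w 0 + p 1 * w 1 + p 2 * w 2 + p 3 * w 3 = 0 := by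
    simp only [hw]
    linear_combination hpv - Real.sin θ * hpu_re - Real.cos θ * hpu_im
  obtain ⟨q, hq⟩ : ∃ q, q = w 0 ^ 2 + w 1 ^ 2 + w 2 ^ 2 - w 3 ^ 2 := ⟨_, rfl⟩
  have hcq : c = 4 * m ^ 2 * q := by
    have h := minkowski_sq_wave (fun α => (u α).re) (fun α => (u α).im) v (Real.sin θ) (Real.cos θ)
      (Real.sin_sq_add_cos_sq θ) (by linear_combination hnull_re)
      (by linear_combination hnull_im / 2) huv_re huv_im
    rw [hc, hq]
    simp only [hw, h, normSq_apply]
    ring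
  have hdet : D.det = 1 := by
    have hD1 : D = 1 + Matrix.replicateCol Unit w * Matrix.replicateRow Unit p := by
      ext α β
      simp [hDw, Matrix.one_apply, Matrix.mul_apply]
    rw [hD1, Matrix.det_one_add_replicateCol_mul_replicateRow, dotProduct, Fin.sum_univ_four, hpw,
      add_zero]
  obtain ⟨A, hA⟩ : ∃ A : Matrix (Fin 4) (Fin 2) ℝ,
      A = !![p 0, w 0; p 1, w 1; p 2, w 2; -p 3, w 3] := ⟨_, rfl⟩
  obtain ⟨B, hB⟩ : ∃ B : Matrix (Fin 2) (Fin 4) ℝ,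
      B = !![w 0 + q * p 0, w 1 + q * p 1, w 2 + q * p 2, -w 3 + q * p 3;
        p 0, p 1, p 2, p 3] := ⟨_, rfl⟩
  have hSAB : S = A * B := by
    rw [hS, hη, hA, hB, hq]
    ext i j
    fin_cases i <;> fin_cases j <;>
      simp [Matrix.mul_apply, Fin.sum_univ_four, Matrix.diagonal_apply, hDw] <;>
      ring
  have hBA : B * A = !![-c, q; -(4 * m ^ 2), 0] := by
    rw [hA, hB]
    ext i j
    fin_cases i <;> fin_cases j <;> simp [Matrix.mul_apply, Fin.sum_univ_four]
    · linear_combination hpw + q * hp_time + hcq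
    · linear_combination q * hpw - hq
    · linear_combination hp_time
    · linear_combination hpw
  have htr : S.trace = -c := by
    rw [hSAB, Matrix.trace_mul_comm, hBA, Matrix.trace_fin_two]
    simp
  have hchar : S.charpoly = X ^ 4 + C c * X ^ 3 + C c * X ^ 2 := by
    rw [hSAB, charpoly_mul_of_inner_two, hBA, Matrix.trace_fin_two_of, Matrix.det_fin_two_of]
    have : -c * 0 - q * -(4 * m ^ 2) = c := by rw [hcq]; ring
    rw [this, add_zero, C_neg]
    ring
  refine ⟨hdet, hchar, htr, ?_, ?_, ?_⟩
  · have h2 : (S * S).trace = ((B * A) * (B * A)).trace := by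
      rw [hSAB, Matrix.mul_assoc, Matrix.trace_mul_comm, Matrix.mul_assoc, Matrix.mul_assoc,
        Matrix.mul_assoc]
    rw [h2, htr, hBA, Matrix.trace_fin_two]
    simp [Matrix.mul_apply]
    linear_combination -hcq
  · rw [hSAB, adjugate_mul_eq_zero_of_inner_two, Matrix.trace_zero]
  · rw [Matrix.det_eq_sign_charpoly_coeff, hchar]
    simp [coeff_X_pow]
end

section
/- Fix ε = ±1 and for q ∈ ℝ⁴ let M_ε(q) be the 5×5 real matrix [[cos(q³+q⁴), −ε sin(q³+q⁴), 0, 0, q¹], [ε sin(q³+q⁴), cos(q³+q⁴), 0, 0, q²], [0, 0, 1, 0, q³], [0, 0, 0, 1, q⁴], [0, 0, 0, 0, 1]]. Then the set SG₀^ε = { M_ε(q) : q ∈ ℝ⁴ } is a subgroup of GL(5,ℝ) (it contains the identity and is closed under matrix multiplication and inversion), and its affine action on ℝ⁴, sending x to the first four components of M_ε(q)·(x¹,x²,x³,x⁴,1)ᵀ, is simply transitive: for all x, y ∈ ℝ⁴ there exists a unique q ∈ ℝ⁴ whose action sends x to y. -/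
/-!
The last column of `M_ε(q)` is `(q, 1)`, and the linear part of `M_ε(q)` is the rotation by
`ε (q³ + q⁴)` in the first two coordinates. The linear part fixes the last two coordinates, so
`q³ + q⁴` is additive under composition, and the addition formulas for sine and cosine
(with `ε² = 1`) give `M_ε(q) M_ε(q') = M_ε(q · q')`, where `q · q'` is the image of the point `q'`
under the affine action of `q` (`masslessScrew_mul`). This is closure under multiplication.

Simple transitivity (`masslessScrewAction_existsUnique`) holds because the last two components of
`q · x = y` force `q³` and `q⁴`, hence the rotation, after which the first two components determine
`q¹` and `q²`. Inverses follow: the `q'` carrying the point `q` to the origin satisfies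
`M_ε(q') M_ε(q) = M_ε(0) = 1`.
-/

open Matrix

/-- The 5×5 matrix `M_ε(q)` realising an element of the massless screw group. -/
noncomputable def masslessScrew (ε : ℝ) (q : Fin 4 → ℝ) : Matrix (Fin 5) (Fin 5) ℝ :=
  !![Real.cos (q 2 + q 3), -ε * Real.sin (q 2 + q 3), 0, 0, q 0;
     ε * Real.sin (q 2 + q 3), Real.cos (q 2 + q 3), 0, 0, q 1;
     0, 0, 1, 0, q 2;
     0, 0, 0, 1, q 3;
     0, 0, 0, 0, 1]

/-- The affine action of `M_ε(q)` on `ℝ⁴`: the first four components of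
`M_ε(q)·(x¹,x²,x³,x⁴,1)ᵀ`. -/
noncomputable def masslessScrewAction (ε : ℝ) (q : Fin 4 → ℝ) (x : Fin 4 → ℝ) : Fin 4 → ℝ :=
  fun i => (masslessScrew ε q).mulVec ![x 0, x 1, x 2, x 3, 1] i.castSucc

theorem masslessScrewAction_eq (ε : ℝ) (q x : Fin 4 → ℝ) :
    masslessScrewAction ε q x =
      ![Real.cos (q 2 + q 3) * x 0 - ε * Real.sin (q 2 + q 3) * x 1 + q 0,
        ε * Real.sin (q 2 + q 3) * x 0 + Real.cos (q 2 + q 3) * x 1 + q 1,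
        x 2 + q 2, x 3 + q 3] := by
  ext i
  fin_cases i <;>
    simp [masslessScrewAction, masslessScrew, Matrix.mulVec, dotProduct, Fin.sum_univ_succ] <;>
    ring

theorem masslessScrew_zero (ε : ℝ) : masslessScrew ε 0 = 1 := by
  ext i j
  fin_cases i <;> fin_cases j <;> simp [masslessScrew]

/-- The group law in the coordinates `q` is the affine action of `ℝ⁴` on itself. -/
theorem masslessScrew_mul (ε : ℝ) (hε : ε ^ 2 = 1) (q q' : Fin 4 → ℝ) :
    masslessScrew ε q * masslessScrew ε q' = masslessScrew ε (masslessScrewAction ε q q') := by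
  have hangle : q' 2 + q 2 + (q' 3 + q 3) = (q 2 + q 3) + (q' 2 + q' 3) := by ring
  rw [masslessScrewAction_eq]
  ext i j
  fin_cases i <;> fin_cases j <;>
    simp [masslessScrew, Matrix.mul_apply, Fin.sum_univ_succ, hangle,
      Real.cos_add (q 2 + q 3), Real.sin_add (q 2 + q 3)] <;>
    first
    | ring1
    -- Only the two rotation-block diagonal entries, with their `ε²` term, need `hε`.
    | linear_combination (-Real.sin (q 2 + q 3) * Real.sin (q' 2 + q' 3)) * hε

theorem masslessScrewAction_existsUnique (ε : ℝ) (x y : Fin 4 → ℝ) :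
    ∃! q : Fin 4 → ℝ, masslessScrewAction ε q x = y := by
  -- The rotation angle forced by the last two components.
  set θ := (y 2 - x 2) + (y 3 - x 3) with hθ
  refine ⟨![y 0 - (Real.cos θ * x 0 - ε * Real.sin θ * x 1),
    y 1 - (ε * Real.sin θ * x 0 + Real.cos θ * x 1), y 2 - x 2, y 3 - x 3], ?_, ?_⟩
  · simp only [masslessScrewAction_eq]
    ext i
    fin_cases i <;> simp [← hθ]
  · rintro q rfl
    have hq : θ = q 2 + q 3 := by simp [hθ, masslessScrewAction_eq]
    rw [hq]
    ext i
    fin_cases i <;> simp [masslessScrewAction_eq]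

/-- For `ε = ±1`, the set `SG₀^ε = {M_ε(q) : q ∈ ℝ⁴}` contains the
identity and is closed under matrix multiplication and inversion (hence is a subgroup
of `GL(5,ℝ)`), and its affine action on `ℝ⁴` is simply transitive. -/
theorem masslessScrew_group_and_simply_transitive
    (ε : ℝ) (hε : ε = 1 ∨ ε = -1) :
    (∃ q : Fin 4 → ℝ, masslessScrew ε q = 1) ∧
    (∀ q q' : Fin 4 → ℝ, ∃ q'' : Fin 4 → ℝ,
      masslessScrew ε q * masslessScrew ε q' = masslessScrew ε q'') ∧
    (∀ q : Fin 4 → ℝ, ∃ q' : Fin 4 → ℝ,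
      masslessScrew ε q * masslessScrew ε q' = 1 ∧
      masslessScrew ε q' * masslessScrew ε q = 1) ∧
    (∀ x y : Fin 4 → ℝ, ∃! q : Fin 4 → ℝ, masslessScrewAction ε q x = y) := by
  have hε2 : ε ^ 2 = 1 := by rcases hε with rfl | rfl <;> norm_num
  refine ⟨⟨0, masslessScrew_zero ε⟩, fun q q' => ⟨_, masslessScrew_mul ε hε2 q q'⟩, fun q => ?_,
    masslessScrewAction_existsUnique ε⟩
  obtain ⟨q', hq', -⟩ := masslessScrewAction_existsUnique ε q 0
  have hinv : masslessScrew ε q' * masslessScrew ε q = 1 := by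
    rw [masslessScrew_mul ε hε2, hq', masslessScrew_zero]
  exact ⟨q', mul_eq_one_comm.mp hinv, hinv⟩
end

section
/- Let m > 0 and for q ∈ ℝ⁴ let N_m(q) be the 5×5 real matrix [[cos(2mq⁴), −sin(2mq⁴), 0, 0, q¹], [sin(2mq⁴), cos(2mq⁴), 0, 0, q²], [0, 0, 1, 0, q³], [0, 0, 0, 1, q⁴], [0, 0, 0, 0, 1]]. Then the set SG_m = { N_m(q) : q ∈ ℝ⁴ } is a subgroup of GL(5,ℝ) (it contains the identity and is closed under matrix multiplication and inversion), and its affine action on ℝ⁴, sending x to the first four components of N_m(q)·(x¹,x²,x³,x⁴,1)ᵀ, is simply transitive: for all x, y ∈ ℝ⁴ there exists a unique q ∈ ℝ⁴ whose action sends x to y. -/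
/-!
The linear part of `N_m(q)` is the rotation by the angle `2 m q⁴` in the first plane, and this
angle is linear in the translation component `q⁴`. Both are additive under composition, so the
product of two such matrices is again one (`massiveScrew_mul`), and inverses come from solving
`q * q' = 0` for this composition law. For simple transitivity, the fourth coordinate of the
action is `x⁴ + q⁴`, which determines `q⁴` and hence the rotation; the remaining coordinates of `q`
are then determined by translation (`massiveScrewAction_eq_iff`).
-/

open Matrix

/-- The 5×5 matrix `N_m(q)` realising an element of the massive screw group. -/
noncomputable def massiveScrew (m : ℝ) (q : Fin 4 → ℝ) : Matrix (Fin 5) (Fin 5) ℝ :=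
  !![Real.cos (2 * m * q 3), -Real.sin (2 * m * q 3), 0, 0, q 0;
     Real.sin (2 * m * q 3), Real.cos (2 * m * q 3), 0, 0, q 1;
     0, 0, 1, 0, q 2;
     0, 0, 0, 1, q 3;
     0, 0, 0, 0, 1]

/-- The affine action of `N_m(q)` on `ℝ⁴`: the first four components of
`N_m(q)·(x¹,x²,x³,x⁴,1)ᵀ`. -/
noncomputable def massiveScrewAction (m : ℝ) (q : Fin 4 → ℝ) (x : Fin 4 → ℝ) : Fin 4 → ℝ :=
  fun i => (massiveScrew m q).mulVec ![x 0, x 1, x 2, x 3, 1] i.castSucc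

/-- The group law of `SG_m` in the coordinates `q`. -/
theorem massiveScrew_mul (m : ℝ) (q r : Fin 4 → ℝ) :
    massiveScrew m q * massiveScrew m r = massiveScrew m
      ![Real.cos (2 * m * q 3) * r 0 - Real.sin (2 * m * q 3) * r 1 + q 0,
        Real.sin (2 * m * q 3) * r 0 + Real.cos (2 * m * q 3) * r 1 + q 1,
        r 2 + q 2, r 3 + q 3] := by
  have h : 2 * m * (r 3 + q 3) = 2 * m * q 3 + 2 * m * r 3 := by ring
  ext i j
  fin_cases i <;> fin_cases j <;>
    simp [massiveScrew, Matrix.mul_apply, Fin.sum_univ_succ, h, Real.cos_add, Real.sin_add] <;>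
    ring

theorem massiveScrew_zero (m : ℝ) : massiveScrew m ![0, 0, 0, 0] = 1 := by
  ext i j
  fin_cases i <;> fin_cases j <;> simp [massiveScrew]

/-- The equation `N_m(q) · x = y` solved for `q`: since `q⁴ = y⁴ - x⁴`, the rotation angle is
`2 m (y⁴ - x⁴)`. -/
theorem massiveScrewAction_eq_iff (m : ℝ) (q x y : Fin 4 → ℝ) :
    massiveScrewAction m q x = y ↔
      q = ![y 0 - (Real.cos (2 * m * (y 3 - x 3)) * x 0 - Real.sin (2 * m * (y 3 - x 3)) * x 1),
        y 1 - (Real.sin (2 * m * (y 3 - x 3)) * x 0 + Real.cos (2 * m * (y 3 - x 3)) * x 1),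
        y 2 - x 2, y 3 - x 3] := by
  have act : massiveScrewAction m q x =
      ![Real.cos (2 * m * q 3) * x 0 - Real.sin (2 * m * q 3) * x 1 + q 0,
        Real.sin (2 * m * q 3) * x 0 + Real.cos (2 * m * q 3) * x 1 + q 1,
        x 2 + q 2, x 3 + q 3] := by
    ext i
    fin_cases i <;>
      simp [massiveScrewAction, massiveScrew, Matrix.mulVec, dotProduct, Fin.sum_univ_succ] <;>
      ring
  rw [act]
  constructor
  · rintro rfl
    ext i
    fin_cases i <;> simp
  · intro h
    have h3 : q 3 = y 3 - x 3 := by rw [h]; simp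
    rw [h3, h]
    ext i
    fin_cases i <;> simp

/-- For `m > 0`, the set `SG_m = {N_m(q) : q ∈ ℝ⁴}` contains the
identity and is closed under matrix multiplication and inversion (hence is a subgroup
of `GL(5,ℝ)`), and its affine action on `ℝ⁴` is simply transitive. -/
theorem massiveScrew_group_and_simply_transitive
    (m : ℝ) (hm : 0 < m) :
    (∃ q : Fin 4 → ℝ, massiveScrew m q = 1) ∧
    (∀ q q' : Fin 4 → ℝ, ∃ q'' : Fin 4 → ℝ,
      massiveScrew m q * massiveScrew m q' = massiveScrew m q'') ∧
    (∀ q : Fin 4 → ℝ, ∃ q' : Fin 4 → ℝ,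
      massiveScrew m q * massiveScrew m q' = 1 ∧
      massiveScrew m q' * massiveScrew m q = 1) ∧
    (∀ x y : Fin 4 → ℝ, ∃! q : Fin 4 → ℝ, massiveScrewAction m q x = y) := by
  refine ⟨⟨_, massiveScrew_zero m⟩, fun q r => ⟨_, massiveScrew_mul m q r⟩, fun q => ?_,
    fun x y => ⟨_, (massiveScrewAction_eq_iff m _ x y).2 rfl,
      fun q h => (massiveScrewAction_eq_iff m q x y).1 h⟩⟩
  -- The inverse rotates by the opposite angle and translates by `-R⁻¹ q`.
  refine ⟨![-(Real.cos (2 * m * q 3) * q 0 + Real.sin (2 * m * q 3) * q 1),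
    -(-Real.sin (2 * m * q 3) * q 0 + Real.cos (2 * m * q 3) * q 1), -q 2, -q 3], ?_⟩
  have key := Real.sin_sq_add_cos_sq (2 * m * q 3)
  have right : massiveScrew m q * massiveScrew m
      ![-(Real.cos (2 * m * q 3) * q 0 + Real.sin (2 * m * q 3) * q 1),
        -(-Real.sin (2 * m * q 3) * q 0 + Real.cos (2 * m * q 3) * q 1), -q 2, -q 3] = 1 := by
    rw [massiveScrew_mul, ← massiveScrew_zero m]
    congr 1
    ext i
    fin_cases i
    · simp
      linear_combination -q 0 * key
    · simp
      linear_combination -q 1 * key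
    · simp
    · simp
  exact ⟨right, mul_eq_one_comm.1 right⟩
end

section
/- For ε = ±1, let SG₀^ε = { M_ε(q) : q ∈ ℝ⁴ } where M_ε(q) is the 5×5 real matrix [[cos(q³+q⁴), −ε sin(q³+q⁴), 0, 0, q¹], [ε sin(q³+q⁴), cos(q³+q⁴), 0, 0, q²], [0, 0, 1, 0, q³], [0, 0, 0, 1, q⁴], [0, 0, 0, 0, 1]]. There does not exist a 5×5 real matrix P of block form [[Λ, w], [0, 1]], with Λ a 4×4 real matrix satisfying Λᵀ η Λ = η, det Λ = 1, and Λ₄₄ > 0 (where η = diag(1,1,1,−1)), and w ∈ ℝ⁴, such that P⁻¹ · SG₀^+ · P = SG₀^− as sets of matrices. -/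
/-!
Suppose `P = [[Λ, w], [0, 1]]` conjugates `SG₀^+` onto `SG₀^−`. Every `M_{-}(0, 0, x, 0)` then
satisfies `P M_{-}(0, 0, x, 0) = M_{+}(q) P` for some `q`, and comparing translation parts gives
`q³ + q⁴ = k x` with `k = Λ₃₃ + Λ₄₃` (`exists_intertwined`). Taking `x = π` shows that `Λ` has zero
lower-left block, so by the Lorentz condition `Λ` is block diagonal with an orthogonal block `O`
and a block `L ∈ O(1,1)`, where `det O = det L = D = ±1`.

Conjugating a plane rotation by `O` reverses its angle exactly when `D = -1`, which gives
`sin (k x) = -D sin x` for all `x`. On the other hand `L₄₄ > 0` forces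
`D k = L₄₄ + L₃₄ > 0` (`block_facts`). For `x = π / (1 + D k)` both `x` and `D k x` lie in `(0, π)`,
so the two sines in `sin (D k x) = -sin x` are positive, a contradiction.
-/

open Matrix

/-- The 5×5 matrix of block form `[[Λ, w], [0, 1]]` representing an element of the
Poincaré group. -/
def poincareMatrix (Λ : Matrix (Fin 4) (Fin 4) ℝ) (w : Fin 4 → ℝ) :
    Matrix (Fin 5) (Fin 5) ℝ :=
  Matrix.of fun i j =>
    if hi : (i : ℕ) < 4 then
      (if hj : (j : ℕ) < 4 then Λ ⟨i, hi⟩ ⟨j, hj⟩ else w ⟨i, hi⟩)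
    else
      (if (j : ℕ) < 4 then 0 else 1)

/-- Entrywise consequences of conjugation onto `SG₀^−` for the preimage of
`M_{-}(0, 0, x, 0)`: its rotation angle is `(Λ 2 2 + Λ 3 2) * x`, and the linear parts
intertwine. -/
lemma exists_intertwined {Λ : Matrix (Fin 4) (Fin 4) ℝ} {w : Fin 4 → ℝ}
    (h : (fun A => (poincareMatrix Λ w)⁻¹ * A * poincareMatrix Λ w) ''
            {A | ∃ q : Fin 4 → ℝ, A = masslessScrew 1 q}
          = {A | ∃ q : Fin 4 → ℝ, A = masslessScrew (-1) q}) (x : ℝ) :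
    ∃ θ : ℝ, θ = (Λ 2 2 + Λ 3 2) * x ∧
      Λ 0 0 * Real.cos x - Λ 0 1 * Real.sin x
        = Real.cos θ * Λ 0 0 - Real.sin θ * Λ 1 0 ∧
      Λ 1 0 * Real.cos x - Λ 1 1 * Real.sin x
        = Real.sin θ * Λ 0 0 + Real.cos θ * Λ 1 0 ∧
      Λ 2 0 * Real.cos x - Λ 2 1 * Real.sin x = Λ 2 0 ∧
      Λ 2 0 * Real.sin x + Λ 2 1 * Real.cos x = Λ 2 1 ∧
      Λ 3 0 * Real.cos x - Λ 3 1 * Real.sin x = Λ 3 0 ∧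
      Λ 3 0 * Real.sin x + Λ 3 1 * Real.cos x = Λ 3 1 := by
  have hmem : masslessScrew (-1) ![0, 0, x, 0] ∈
      {A | ∃ q : Fin 4 → ℝ, A = masslessScrew (-1) q} := ⟨_, rfl⟩
  rw [← h] at hmem
  obtain ⟨_, ⟨q, rfl⟩, hq⟩ := hmem
  have hdet : IsUnit (poincareMatrix Λ w).det := by
    -- Otherwise the junk inverse is `0`, but every screw matrix has bottom-right entry `1`.
    by_contra hn
    have := congrFun (congrFun hq 4) 4
    simp [Matrix.nonsing_inv_apply_not_isUnit _ hn, masslessScrew] at this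
  have key : masslessScrew 1 q * poincareMatrix Λ w
      = poincareMatrix Λ w * masslessScrew (-1) ![0, 0, x, 0] := by
    rw [← hq]
    simp only [← Matrix.mul_assoc, Matrix.mul_nonsing_inv _ hdet, Matrix.one_mul]
  have e := fun i j => congrFun (congrFun key i) j
  have e00 := e 0 0
  have e10 := e 1 0
  have e20 := e 2 0
  have e21 := e 2 1
  have e30 := e 3 0
  have e31 := e 3 1
  have e24 := e 2 4
  have e34 := e 3 4
  simp [masslessScrew, poincareMatrix, Matrix.mul_apply, Fin.sum_univ_five]
    at e00 e10 e20 e21 e30 e31 e24 e34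
  refine ⟨q 2 + q 3, ?_, ?_, ?_, ?_, ?_, ?_, ?_⟩ <;> linarith

/-- For `O = !![a, b; c, d]` orthogonal and `L = !![p, r; s, v]` in `O(1,1)` with `v > 0` and
`det O * det L = 1`, the sum of the first column of `L` has the sign of `det O`; up to that sign
it equals `v + r`. -/
lemma block_facts {a b c d p r s v : ℝ} (hac : a * a + c * c = 1) (hab : a * b + c * d = 0)
    (hbd : b * b + d * d = 1) (hpr : p * r - s * v = 0) (hrv : r * r - v * v = -1)
    (hv : 0 < v) (hdet : (a * d - b * c) * (p * v - r * s) = 1) :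
    (a * d - b * c = 1 ∨ a * d - b * c = -1) ∧
      p + s = (a * d - b * c) * (v + r) ∧ 0 < v + r := by
  have hD : (a * d - b * c) * (a * d - b * c) = 1 := by
    linear_combination (b * b + d * d) * hac + hbd - (a * b + c * d) * hab
  have hE : p * v - r * s = a * d - b * c := by
    linear_combination (a * d - b * c) * hdet - (p * v - r * s) * hD
  refine ⟨mul_self_eq_one_iff.mp hD, ?_, ?_⟩
  · rw [← hE]
    linear_combination -(r + v) * hpr + (p + s) * hrv
  · nlinarith

/-- There is no element `P = [[Λ, w], [0, 1]]` of the restricted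
Poincaré group (`Λᵀ η Λ = η`, `det Λ = 1`, `Λ₄₄ > 0`, `w ∈ ℝ⁴`) conjugating the
right-handed massless screw group `SG₀^+` onto the left-handed one `SG₀^−`. -/
theorem no_restricted_poincare_conjugation_between_massless_screw_groups
    (η : Matrix (Fin 4) (Fin 4) ℝ)
    (hη : η = Matrix.diagonal ![1, 1, 1, -1]) :
    ¬ ∃ (Λ : Matrix (Fin 4) (Fin 4) ℝ) (w : Fin 4 → ℝ),
        Λᵀ * η * Λ = η ∧ Λ.det = 1 ∧ 0 < Λ 3 3 ∧
        (fun A => (poincareMatrix Λ w)⁻¹ * A * poincareMatrix Λ w) ''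
            {A | ∃ q : Fin 4 → ℝ, A = masslessScrew 1 q}
          = {A | ∃ q : Fin 4 → ℝ, A = masslessScrew (-1) q} := by
  rintro ⟨Λ, w, hL, hdet, hpos, h⟩
  subst hη
  obtain ⟨_, -, -, -, z20, z21, z30, z31⟩ := exists_intertwined h Real.pi
  simp only [Real.cos_pi, Real.sin_pi] at z20 z21 z30 z31
  replace z20 : Λ 2 0 = 0 := by linarith
  replace z21 : Λ 2 1 = 0 := by linarith
  replace z30 : Λ 3 0 = 0 := by linarith
  replace z31 : Λ 3 1 = 0 := by linarith
  have e := fun i j => congrFun (congrFun hL i) j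
  have e00 := e 0 0
  have e01 := e 0 1
  have e11 := e 1 1
  have e03 := e 0 3
  have e13 := e 1 3
  have e23 := e 2 3
  have e33 := e 3 3
  simp [Matrix.mul_apply, Fin.sum_univ_four, Matrix.diagonal_apply, z20, z21, z30, z31]
    at e00 e01 e11 e03 e13 e23 e33
  rw [Matrix.det_succ_row_zero] at hdet
  simp [Fin.sum_univ_four, Matrix.det_fin_three, Fin.succAbove, z20, z21, z30, z31] at hdet
  replace hdet : (Λ 0 0 * Λ 1 1 - Λ 0 1 * Λ 1 0) * (Λ 2 2 * Λ 3 3 - Λ 2 3 * Λ 3 2) = 1 := by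
    linear_combination hdet
  have z03 : Λ 0 3 = 0 := by
    linear_combination (Λ 2 2 * Λ 3 3 - Λ 2 3 * Λ 3 2) * (Λ 1 1 * e03 - Λ 1 0 * e13)
      - Λ 0 3 * hdet
  have z13 : Λ 1 3 = 0 := by
    linear_combination (Λ 2 2 * Λ 3 3 - Λ 2 3 * Λ 3 2) * (Λ 0 0 * e13 - Λ 0 1 * e03)
      - Λ 1 3 * hdet
  simp only [z03, z13, mul_zero, zero_add] at e23 e33
  obtain ⟨hD, hk, hkpos⟩ := block_facts e00 e01 e11 (by linarith) (by linarith) hpos hdet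
  set K := Λ 3 3 + Λ 2 3
  set x := Real.pi / (1 + K) with hx
  have hxpos : 0 < x := by positivity
  have hKxpos : 0 < K * x := by positivity
  have hsum : x + K * x = Real.pi := by
    rw [hx]
    field_simp
  have hsin : 0 < Real.sin x := Real.sin_pos_of_pos_of_lt_pi hxpos (by linarith)
  have hsinK : 0 < Real.sin (K * x) := Real.sin_pos_of_pos_of_lt_pi hKxpos (by linarith)
  obtain ⟨θ, hθ, c00, c10, -⟩ := exists_intertwined h x
  have hS : Real.sin θ = -(Λ 0 0 * Λ 1 1 - Λ 0 1 * Λ 1 0) * Real.sin x := by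
    linear_combination Λ 1 0 * c00 - Λ 0 0 * c10 - Real.sin θ * e00
  rw [hk] at hθ
  rcases hD with hD | hD
  · rw [hθ, hD, one_mul] at hS
    linarith
  · rw [hθ, hD, neg_one_mul, neg_mul, Real.sin_neg] at hS
    linarith
end

section
/- Fix ε = ±1 and a ∈ ℝ. Define φ_ε : ℝ⁴ → ℝ⁴ by φ_ε(x) = (x¹ + a cos(x³+x⁴), x² + ε a sin(x³+x⁴), x³, x⁴), and for each q ∈ ℝ⁴ define ξ_q : ℝ⁴ → ℝ⁴ by ξ_q(x) = (x¹ cos(q³+q⁴) − ε x² sin(q³+q⁴) + q¹, ε x¹ sin(q³+q⁴) + x² cos(q³+q⁴) + q², x³ + q³, x⁴ + q⁴). Then ξ_q ∘ φ_ε = φ_ε ∘ ξ_q for every q ∈ ℝ⁴. -/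
/-- The massless solution
`φ_ε(x) = (x¹ + a cos(x³+x⁴), x² + εa sin(x³+x⁴), x³, x⁴)` is equivariant with respect
to every isometry
`ξ_q(x) = (x¹cos(q³+q⁴) − εx²sin(q³+q⁴) + q¹, εx¹sin(q³+q⁴) + x²cos(q³+q⁴) + q², x³+q³, x⁴+q⁴)`
of the massless screw group: `ξ_q ∘ φ_ε = φ_ε ∘ ξ_q` for every `q ∈ ℝ⁴`. -/
theorem massless_solution_equivariant
    (ε : ℝ) (hε : ε = 1 ∨ ε = -1) (a : ℝ)
    (φ : (Fin 4 → ℝ) → (Fin 4 → ℝ))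
    (hφ : ∀ x : Fin 4 → ℝ, φ x =
      ![x 0 + a * Real.cos (x 2 + x 3),
        x 1 + ε * a * Real.sin (x 2 + x 3),
        x 2,
        x 3])
    (ξ : (Fin 4 → ℝ) → (Fin 4 → ℝ) → (Fin 4 → ℝ))
    (hξ : ∀ q x : Fin 4 → ℝ, ξ q x =
      ![x 0 * Real.cos (q 2 + q 3) - ε * x 1 * Real.sin (q 2 + q 3) + q 0,
        ε * x 0 * Real.sin (q 2 + q 3) + x 1 * Real.cos (q 2 + q 3) + q 1,
        x 2 + q 2,
        x 3 + q 3]) :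
    ∀ q : Fin 4 → ℝ, ξ q ∘ φ = φ ∘ ξ q := by
  intro q
  have hε2 : ε * ε = 1 := by rcases hε with rfl | rfl <;> norm_num
  funext x
  have hsum : x 2 + q 2 + (x 3 + q 3) = (x 2 + x 3) + (q 2 + q 3) := by ring
  -- The angle-addition formulas turn the rotation by `ε (q³ + q⁴)` into a shift of the phase;
  -- `ε² = 1` matters only in the first coordinate.
  ext i
  fin_cases i
  · simp [hφ, hξ, hsum, Real.cos_add (x 2 + x 3)]
    linear_combination (-a * Real.sin (x 2 + x 3) * Real.sin (q 2 + q 3)) * hε2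
  · simp [hφ, hξ, hsum, Real.sin_add (x 2 + x 3)]
    ring
  · simp [hφ, hξ]
  · simp [hφ, hξ]
end

section
/- Let m > 0 and a, b ∈ ℝ. Define φ : ℝ⁴ → ℝ⁴ by φ(x) = (x¹ + a cos(2mx⁴), x² + a sin(2mx⁴), x³ + 2mb x⁴, x⁴), and for each q ∈ ℝ⁴ define ξ_q : ℝ⁴ → ℝ⁴ by ξ_q(x) = (x¹ cos(2mq⁴) − x² sin(2mq⁴) + q¹, x¹ sin(2mq⁴) + x² cos(2mq⁴) + q², x³ + q³, x⁴ + q⁴). Then for every q ∈ ℝ⁴ one has ξ_q ∘ φ = φ ∘ ξ_{q'}, where q' = (q¹, q², q³ − 2mb q⁴, q⁴). -/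
/-- The massive solution
`φ(x) = (x¹ + a cos(2mx⁴), x² + a sin(2mx⁴), x³ + 2mb x⁴, x⁴)` is homogeneous with
respect to the massive screw group: for every `q ∈ ℝ⁴`, `ξ_q ∘ φ = φ ∘ ξ_{q'}` with
`q' = (q¹, q², q³ − 2mb q⁴, q⁴)`, where
`ξ_q(x) = (x¹cos(2mq⁴) − x²sin(2mq⁴) + q¹, x¹sin(2mq⁴) + x²cos(2mq⁴) + q², x³+q³, x⁴+q⁴)`. -/
theorem massive_solution_homogeneous
    (m : ℝ) (hm : 0 < m) (a b : ℝ)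
    (φ : (Fin 4 → ℝ) → (Fin 4 → ℝ))
    (hφ : ∀ x : Fin 4 → ℝ, φ x =
      ![x 0 + a * Real.cos (2 * m * x 3),
        x 1 + a * Real.sin (2 * m * x 3),
        x 2 + 2 * m * b * x 3,
        x 3])
    (ξ : (Fin 4 → ℝ) → (Fin 4 → ℝ) → (Fin 4 → ℝ))
    (hξ : ∀ q x : Fin 4 → ℝ, ξ q x =
      ![x 0 * Real.cos (2 * m * q 3) - x 1 * Real.sin (2 * m * q 3) + q 0,
        x 0 * Real.sin (2 * m * q 3) + x 1 * Real.cos (2 * m * q 3) + q 1,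
        x 2 + q 2,
        x 3 + q 3]) :
    ∀ q : Fin 4 → ℝ,
      ξ q ∘ φ = φ ∘ ξ ![q 0, q 1, q 2 - 2 * m * b * q 3, q 3] := by
  intro q
  funext x
  simp only [Function.comp_apply, hφ, hξ]
  ext i
  -- The first two coordinates are the angle addition formulas for `2m(x⁴ + q⁴)`; in the third,
  -- the shift `-2mb q⁴` in `q'` cancels the extra term from `2mb (x⁴ + q⁴)`.
  fin_cases i <;> simp [mul_add, Real.cos_add, Real.sin_add] <;> ring
end

section
/- Let ξ ∈ ℝ⁴ and let ⟨x,y⟩ = η^{αβ} x_α y_β denote the Minkowski pairing of covectors, extended bilinearly to ℂ⁴, with ‖ξ‖² = ⟨ξ,ξ⟩. Define the ℂ-linear map T_ξ : ℂ⁴ ⊕ ℂ → ℂ⁴ ⊕ ℂ by T_ξ(v, f) = ( ‖ξ‖² v − ⟨ξ,v⟩ ξ + i f ξ, −i ⟨ξ,v⟩ ). Then det T_ξ = −‖ξ‖⁸. -/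
/-!
In the standard basis of `ℂ⁴ ⊕ ℂ` the map is the explicit `5 × 5` matrix
`[[N·1 − ξ (ηξ)ᵀ, iξ], [−i(ηξ)ᵀ, 0]]` with `N = ⟨ξ,ξ⟩`, and its determinant is expanded directly.
Conceptually, adding `i` times `ξ` times the last row to the first block clears the rank-one
term, after which the determinant is `N³ · (−⟨ξ,ξ⟩) = −N⁴`. The result is a polynomial
identity in the components of `ξ` modulo `i² = −1`, valid also for null `ξ`.
-/

/-- Let `ξ ∈ ℝ⁴` and `⟨x,y⟩ = η^{αβ}x_α y_β` the Minkowski pairing of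
covectors, extended bilinearly to `ℂ⁴`, with `‖ξ‖² = ⟨ξ,ξ⟩`.  The ℂ-linear map
`T_ξ(v,f) = (‖ξ‖²v − ⟨ξ,v⟩ξ + ifξ, −i⟨ξ,v⟩)` on `ℂ⁴ ⊕ ℂ` has determinant `−‖ξ‖⁸`. -/
theorem principal_symbol_determinant
    (mink : (Fin 4 → ℂ) → (Fin 4 → ℂ) → ℂ)
    (hmink : ∀ x y : Fin 4 → ℂ, mink x y = x 0 * y 0 + x 1 * y 1 + x 2 * y 2 - x 3 * y 3)
    (ξ : Fin 4 → ℝ)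
    (ξc : Fin 4 → ℂ) (hξc : ∀ i : Fin 4, ξc i = (ξ i : ℂ))
    (T : ((Fin 4 → ℂ) × ℂ) →ₗ[ℂ] ((Fin 4 → ℂ) × ℂ))
    (hT : ∀ (v : Fin 4 → ℂ) (f : ℂ), T (v, f) =
      (fun α => mink ξc ξc * v α - mink ξc v * ξc α + Complex.I * f * ξc α,
       -Complex.I * mink ξc v)) :
    LinearMap.det T = -(mink ξc ξc) ^ 4 := by
  let b := ((Pi.basisFun ℂ (Fin 4)).prod (Module.Basis.singleton (Fin 1) ℂ)).reindex
    (finSumFinEquiv (m := 4) (n := 1))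
  have e0 : finSumFinEquiv.symm (0 : Fin (4 + 1)) = Sum.inl 0 := rfl
  have e1 : finSumFinEquiv.symm (1 : Fin (4 + 1)) = Sum.inl 1 := rfl
  have e2 : finSumFinEquiv.symm (2 : Fin (4 + 1)) = Sum.inl 2 := rfl
  have e3 : finSumFinEquiv.symm (3 : Fin (4 + 1)) = Sum.inl 3 := rfl
  have e4 : finSumFinEquiv.symm (4 : Fin (4 + 1)) = Sum.inr 0 := rfl
  -- `N` is kept as an atom in the entries, so that the expansion stays small.
  obtain ⟨N, hN⟩ : ∃ N, N = mink ξc ξc := ⟨_, rfl⟩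
  have hN' := hN
  rw [hmink] at hN'
  rw [← hN] at hT ⊢
  have hM : LinearMap.toMatrix b b T = !![
      N - ξc 0 * ξc 0, -(ξc 1 * ξc 0), -(ξc 2 * ξc 0), ξc 3 * ξc 0, Complex.I * ξc 0;
      -(ξc 0 * ξc 1), N - ξc 1 * ξc 1, -(ξc 2 * ξc 1), ξc 3 * ξc 1, Complex.I * ξc 1;
      -(ξc 0 * ξc 2), -(ξc 1 * ξc 2), N - ξc 2 * ξc 2, ξc 3 * ξc 2, Complex.I * ξc 2;
      -(ξc 0 * ξc 3), -(ξc 1 * ξc 3), -(ξc 2 * ξc 3), N + ξc 3 * ξc 3, Complex.I * ξc 3;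
      -Complex.I * ξc 0, -Complex.I * ξc 1, -Complex.I * ξc 2, Complex.I * ξc 3, 0] := by
    ext i j
    fin_cases i <;> fin_cases j <;>
      simp [LinearMap.toMatrix_apply, b, e0, e1, e2, e3, e4, hT, hmink, Module.Basis.prod_apply]
  rw [← LinearMap.det_toMatrix b, hM]
  have hI := Complex.I_sq
  simp [Matrix.det_succ_row_zero, Fin.sum_univ_succ, Fin.succAbove]
  -- The determinant is `i² N³ ⟨ξ,ξ⟩`, before using `i² = -1` and `N = ⟨ξ,ξ⟩`.
  linear_combination N ^ 3 * (ξc 0 * ξc 0 + ξc 1 * ξc 1 + ξc 2 * ξc 2 - ξc 3 * ξc 3) * hI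
    + N ^ 3 * hN'
end

section
/- Let a > 0 and let σ¹ = [[0,1],[1,0]], σ² = [[0,−i],[i,0]], σ³ = [[1,0],[0,−1]], σ⁴ = [[1,0],[0,1]] be the covariant Pauli matrices, and σ̃¹ = [[0,−1],[−1,0]], σ̃² = [[0,−i],[i,0]], σ̃³ = [[−1,0],[0,1]], σ̃⁴ = [[1,0],[0,1]] the contravariant Pauli matrices. Define ξ, η : ℝ⁴ → ℂ² by ξ(x) = √(a/2) · (0, i)ᵀ e^{i(x³+x⁴)/2} and η(x) = √(a/2) · (1, 0)ᵀ e^{i(x³+x⁴)/2}. Then ξ satisfies the left-handed massless Dirac equation Σ_{α=1}^{4} σ^α ∂ξ/∂x^α = 0, and η satisfies the right-handed massless Dirac equation Σ_{α=1}^{4} σ̃^α ∂η/∂x^α = 0. -/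
/-! Both fields are a constant spinor times the plane wave `e^{i(x³+x⁴)/2}`, whose partial
derivatives in `x¹, x²` vanish and in `x³, x⁴` coincide. The equations thus reduce to
`(σ³ + σ⁴)(0, i)ᵀ = 0` and `(σ̃³ + σ̃⁴)(1, 0)ᵀ = 0`, where `σ³ + σ⁴ = diag(2, 0)` and
`σ̃³ + σ̃⁴ = diag(0, 2)`. -/

open Complex

/-- Directional derivative of the plane wave `C e^{i(x³+x⁴)/2}`; coordinates are indexed
from `0`, so `x³, x⁴` are `x 2, x 3`. -/
lemma fderiv_planeWave (C : ℂ) (x v : Fin 4 → ℝ) :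
    fderiv ℝ (fun y : Fin 4 → ℝ => C * Complex.exp (I * (y 2 + y 3) / 2)) x v
      = C * Complex.exp (I * (x 2 + x 3) / 2) * (I * (v 2 + v 3) / 2) := by
  have coord (i : Fin 4) : HasFDerivAt (fun y : Fin 4 → ℝ => (y i : ℂ))
      (Complex.ofRealCLM.comp (ContinuousLinearMap.proj (R := ℝ) (φ := fun _ : Fin 4 => ℝ) i)) x :=
    (Complex.ofRealCLM.comp
      (ContinuousLinearMap.proj (R := ℝ) (φ := fun _ : Fin 4 => ℝ) i)).hasFDerivAt
  have h := (((((coord 2).add (coord 3)).const_mul I).mul_const (2⁻¹ : ℂ)).cexp).const_mul C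
  have e : (fun y : Fin 4 → ℝ => C * Complex.exp (I * (y 2 + y 3) / 2))
      = fun y : Fin 4 → ℝ => C * Complex.exp (I * ((y 2 : ℂ) + y 3) * 2⁻¹) := by
    simp only [div_eq_mul_inv]
  simp only [Pi.add_apply] at h
  rw [e, HasFDerivAt.fderiv h]
  simp [div_eq_mul_inv]
  ring

/-- The Weyl spinor fields `ξ(x) = √(a/2)(0,i)ᵀ e^{i(x³+x⁴)/2}` and
`η(x) = √(a/2)(1,0)ᵀ e^{i(x³+x⁴)/2}` associated with the left-handed and right-handed
massless solutions satisfy the massless Dirac equations `Σ_α σ^α ∂_α ξ = 0` and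
`Σ_α σ̃^α ∂_α η = 0`, where `σ^α` and `σ̃^α` are the covariant and contravariant Pauli
matrices. -/
theorem massless_dirac_equations
    (a : ℝ) (ha : 0 < a)
    (σ : Fin 4 → Matrix (Fin 2) (Fin 2) ℂ)
    (hσ : σ = ![!![0, 1; 1, 0], !![0, -I; I, 0], !![1, 0; 0, -1], !![1, 0; 0, 1]])
    (σt : Fin 4 → Matrix (Fin 2) (Fin 2) ℂ)
    (hσt : σt = ![!![0, -1; -1, 0], !![0, -I; I, 0], !![-1, 0; 0, 1], !![1, 0; 0, 1]])
    (ξ : (Fin 4 → ℝ) → Fin 2 → ℂ)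
    (hξ : ∀ (x : Fin 4 → ℝ) (b : Fin 2),
      ξ x b = (Real.sqrt (a / 2) : ℂ) * (![0, I] b) * Complex.exp (I * (x 2 + x 3) / 2))
    (η : (Fin 4 → ℝ) → Fin 2 → ℂ)
    (hη : ∀ (x : Fin 4 → ℝ) (b : Fin 2),
      η x b = (Real.sqrt (a / 2) : ℂ) * (![1, 0] b) * Complex.exp (I * (x 2 + x 3) / 2)) :
    (∀ (x : Fin 4 → ℝ) (b : Fin 2),
      ∑ α, ∑ c, σ α b c * fderiv ℝ (fun y => ξ y c) x (Pi.single α 1) = 0) ∧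
    (∀ (x : Fin 4 → ℝ) (b : Fin 2),
      ∑ α, ∑ c, σt α b c * fderiv ℝ (fun y => η y c) x (Pi.single α 1) = 0) := by
  subst hσ hσt
  simp only [hξ, hη, fderiv_planeWave]
  constructor <;> intro x b <;> fin_cases b <;>
    simp [Fin.sum_univ_four, Fin.sum_univ_two, Pi.single_apply]
end
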